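/- Let t > 0 and G^t(x,y) = (1/(2π)) e^{-y} K_0(√((x+t)²+y²)). Then ∫_0^1 f^t(s) ds = 8 ∫_{R^2_+} (∂_x G^t)² dx dy > 0, where f^t is defined on [0,1] by f^t(u^t(0,y)) = -∂_x u^t(0,y) = 2(∂_y G^t + 2G^t)(0,y), and u^t(0,·) is the strictly decreasing trace of the explicit front with u^t(0,-∞)=1, u^t(0,+∞)=0. -/

import Mathlib

open MeasureTheory Real Set Filter intervalIntegral

/-- The modified Bessel function of the second kind of order `0`. -/
noncomputable def K0 (r : ℝ) : ℝ := ∫ s in Set.Ioi (0 : ℝ), Real.exp (-(r * Real.cosh s))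

/-- The modified Bessel function of the second kind of order `1`. -/
noncomputable def K1 (r : ℝ) : ℝ :=
  ∫ s in Set.Ioi (0 : ℝ), Real.exp (-(r * Real.cosh s)) * Real.cosh s

/-- `G^t(x,y) = (1/(2π)) e^{-y} K₀(√((x+t)²+y²))`. -/
noncomputable def Gt (t x y : ℝ) : ℝ :=
  (1 / (2 * π)) * Real.exp (-y) * K0 (Real.sqrt ((x + t) ^ 2 + y ^ 2))

/-- The kernel `P^t(x,y) = -2 ∂_x G^t`. -/
noncomputable def Pt (t x y : ℝ) : ℝ :=
  Real.exp (-y) * ((x + t) / (π * Real.sqrt ((x + t) ^ 2 + y ^ 2))) *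
    K1 (Real.sqrt ((x + t) ^ 2 + y ^ 2))

/-- The explicit front `u^t(x,y) = ∫_y^∞ P^t(x,z) dz`. -/
noncomputable def ut (t x y : ℝ) : ℝ := ∫ z in Set.Ioi y, Pt t x z

/-- Moments `∫ e^{-r cosh s} cosh^n s ds`. -/
noncomputable def MB (n : ℕ) (r : ℝ) : ℝ :=
  ∫ s in Set.Ioi (0 : ℝ), Real.exp (-(r * Real.cosh s)) * Real.cosh s ^ n

lemma K0_eq (r : ℝ) : K0 r = MB 0 r := by simp [K0, MB]

lemma K1_eq (r : ℝ) : K1 r = MB 1 r := by simp [K1, MB]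

lemma cosh_lower (s : ℝ) (hs : 0 ≤ s) : 1 + s ^ 2 / 2 ≤ Real.cosh s := by
  have h1 : Real.cosh s = Real.cosh (2 * (s / 2)) := by ring_nf
  rw [h1, Real.cosh_two_mul, Real.cosh_sq]
  have h2 : s / 2 ≤ Real.sinh (s / 2) := Real.self_le_sinh_iff.2 (by linarith)
  nlinarith

lemma pt_bound (n : ℕ) (a : ℝ) (ha : 0 < a) : ∃ C : ℝ, 0 < C ∧ ∀ r, a ≤ r → ∀ s, 0 ≤ s →
    Real.exp (-(r * Real.cosh s)) * Real.cosh s ^ n ≤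
      C * Real.exp (-r) * Real.exp (-(r / 4) * s ^ 2) := by
  refine ⟨(n.factorial : ℝ) / (a / 2) ^ n * Real.exp (a / 2), by positivity, ?_⟩
  intro r hr s hs
  have hc := cosh_lower s hs
  set c := Real.cosh s with hcdef
  have hc1 : 1 ≤ c := Real.one_le_cosh s
  have h1 := Real.pow_div_factorial_le_exp (a / 2 * c) (by positivity) n
  have hf : (0 : ℝ) < n.factorial := by positivity
  have h2 : c ^ n ≤ (n.factorial : ℝ) / (a / 2) ^ n * Real.exp (a / 2 * c) := by
    rw [div_le_iff₀ hf, mul_pow] at h1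
    rw [div_mul_eq_mul_div, le_div_iff₀ (by positivity)]
    linarith
  calc Real.exp (-(r * c)) * c ^ n
      ≤ Real.exp (-(r * c)) * ((n.factorial : ℝ) / (a / 2) ^ n * Real.exp (a / 2 * c)) := by
        gcongr
    _ = (n.factorial : ℝ) / (a / 2) ^ n * Real.exp (-(r * c) + a / 2 * c) := by
        rw [Real.exp_add]; ring
    _ ≤ (n.factorial : ℝ) / (a / 2) ^ n * Real.exp (a / 2 + -r + -(r / 4) * s ^ 2) := by
        refine mul_le_mul_of_nonneg_left (Real.exp_le_exp.2 ?_) (by positivity)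
        nlinarith [mul_le_mul_of_nonneg_left hc (by linarith : 0 ≤ r - a / 2),
          mul_nonneg (by linarith : 0 ≤ r / 2 - a / 2) (sq_nonneg s)]
    _ = _ := by rw [Real.exp_add, Real.exp_add]; ring

lemma MB_cont (n : ℕ) (r : ℝ) :
    Continuous fun s : ℝ => Real.exp (-(r * Real.cosh s)) * Real.cosh s ^ n := by
  have := Real.continuous_cosh
  fun_prop

lemma MB_integrable (n : ℕ) (r : ℝ) (hr : 0 < r) :
    IntegrableOn (fun s : ℝ => Real.exp (-(r * Real.cosh s)) * Real.cosh s ^ n) (Ioi 0) := by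
  obtain ⟨C, hC, h⟩ := pt_bound n r hr
  have hg : IntegrableOn (fun s : ℝ => C * Real.exp (-r) * Real.exp (-(r / 4) * s ^ 2)) (Ioi 0) :=
    ((integrable_exp_neg_mul_sq (by positivity : 0 < r / 4)).const_mul _).integrableOn
  refine Integrable.mono' hg (MB_cont n r).aestronglyMeasurable ?_
  refine (ae_restrict_iff' measurableSet_Ioi).2 (ae_of_all _ fun s hs => ?_)
  rw [Real.norm_of_nonneg (by have := Real.cosh_pos s; positivity)]
  exact h r le_rfl s (le_of_lt hs)

lemma MB_bound (n : ℕ) (a : ℝ) (ha : 0 < a) : ∃ C : ℝ, 0 < C ∧ ∀ r, a ≤ r →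
    MB n r ≤ C * Real.exp (-r) / Real.sqrt r := by
  obtain ⟨C, hC, h⟩ := pt_bound n a ha
  refine ⟨C * Real.sqrt π, by positivity, fun r hr => ?_⟩
  have hr0 : 0 < r := by linarith
  have hg : IntegrableOn (fun s : ℝ => C * Real.exp (-r) * Real.exp (-(r / 4) * s ^ 2)) (Ioi 0) :=
    ((integrable_exp_neg_mul_sq (by positivity : 0 < r / 4)).const_mul _).integrableOn
  have h1 : MB n r ≤ ∫ s in Ioi (0:ℝ), C * Real.exp (-r) * Real.exp (-(r / 4) * s ^ 2) := by
    refine setIntegral_mono_on (MB_integrable n r hr0) hg measurableSet_Ioi ?_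
    intro s hs
    exact h r hr s (le_of_lt hs)
  refine h1.trans (le_of_eq ?_)
  rw [MeasureTheory.integral_const_mul, integral_gaussian_Ioi]
  have : π / (r / 4) = 2 ^ 2 * (π / r) := by field_simp; norm_num
  rw [this, Real.sqrt_mul (by positivity), Real.sqrt_sq (by norm_num), Real.sqrt_div pi_pos.le]
  ring

lemma MB_nonneg (n : ℕ) (r : ℝ) : 0 ≤ MB n r :=
  integral_nonneg fun s => by have := Real.cosh_pos s; positivity

lemma MB_pos (n : ℕ) (r : ℝ) (hr : 0 < r) : 0 < MB n r := by
  unfold MB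
  rw [MeasureTheory.integral_pos_iff_support_of_nonneg _ (MB_integrable n r hr)]
  · have : Function.support (fun s : ℝ => Real.exp (-(r * Real.cosh s)) * Real.cosh s ^ n)
        = univ := by
      ext s
      have := Real.cosh_pos s
      simp only [Function.mem_support, mem_univ, iff_true]
      positivity
    rw [this]
    simp
  · intro s
    have := Real.cosh_pos s
    simp only [Pi.zero_apply]
    positivity

lemma MB_hasDerivAt (n : ℕ) (r : ℝ) (hr : 0 < r) : HasDerivAt (MB n) (-MB (n + 1) r) r := by
  have key := hasDerivAt_integral_of_dominated_loc_of_deriv_le (𝕜 := ℝ)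
    (μ := volume.restrict (Ioi (0:ℝ))) (x₀ := r) (s := Ioi (r / 2))
    (F := fun r s => Real.exp (-(r * Real.cosh s)) * Real.cosh s ^ n)
    (F' := fun r s => -(Real.exp (-(r * Real.cosh s)) * Real.cosh s ^ (n + 1)))
    (bound := fun s => Real.exp (-(r / 2 * Real.cosh s)) * Real.cosh s ^ (n + 1))
    (Ioi_mem_nhds (by linarith)) (Eventually.of_forall fun x => (MB_cont n x).aestronglyMeasurable)
    (MB_integrable n r hr) (MB_cont (n + 1) r).neg.aestronglyMeasurable ?_
    (MB_integrable (n + 1) (r / 2) (by linarith)) ?_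
  · have h := key.2
    rw [MeasureTheory.integral_neg] at h
    exact h
  · refine ae_of_all _ fun s x hx => ?_
    have := Real.cosh_pos s
    rw [norm_neg, Real.norm_of_nonneg (by positivity)]
    have hx' : r / 2 ≤ x := le_of_lt hx
    gcongr
  · refine ae_of_all _ fun s x hx => ?_
    have h1 : HasDerivAt (fun x : ℝ => -(x * Real.cosh s)) (-(1 * Real.cosh s)) x :=
      ((hasDerivAt_id x).mul_const _).neg
    exact (h1.exp.mul_const (Real.cosh s ^ n)).congr_deriv (by ring)

lemma MB_continuousAt (n : ℕ) (r : ℝ) (hr : 0 < r) : ContinuousAt (MB n) r :=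
  (MB_hasDerivAt n r hr).continuousAt

lemma MB_bessel (r : ℝ) (hr : 0 < r) : MB 0 r = MB 2 r - MB 1 r / r := by
  have h0 := MB_integrable 0 r hr
  have h1 := MB_integrable 1 r hr
  have h2 := MB_integrable 2 r hr
  have key := integral_Ioi_of_hasDerivAt_of_tendsto' (a := (0:ℝ)) (m := (0:ℝ))
    (f := fun s : ℝ => Real.exp (-(r * Real.cosh s)) * Real.sinh s)
    (f' := fun s : ℝ => Real.exp (-(r * Real.cosh s)) * Real.cosh s ^ 1
      - r * (Real.exp (-(r * Real.cosh s)) * Real.cosh s ^ 2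
        - Real.exp (-(r * Real.cosh s)) * Real.cosh s ^ 0)) ?_ ?_ ?_
  · have h20 : IntegrableOn (fun s : ℝ => r * (Real.exp (-(r * Real.cosh s)) * Real.cosh s ^ 2
        - Real.exp (-(r * Real.cosh s)) * Real.cosh s ^ 0)) (Ioi 0) := (h2.sub h0).const_mul r
    rw [MeasureTheory.integral_sub h1 h20,
      MeasureTheory.integral_const_mul, MeasureTheory.integral_sub h2 h0] at key
    simp only [Real.sinh_zero, mul_zero, sub_zero] at key
    change MB 1 r - r * (MB 2 r - MB 0 r) = 0 at key
    field_simp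
    linarith
  · intro s _
    have hh : HasDerivAt (fun s : ℝ => -(r * Real.cosh s)) (-(r * Real.sinh s)) s :=
      ((Real.hasDerivAt_cosh s).const_mul r).neg
    exact (hh.exp.mul (Real.hasDerivAt_sinh s)).congr_deriv (by rw [Real.cosh_sq]; ring)
  · exact h1.sub ((h2.sub h0).const_mul r)
  · obtain ⟨C, hC, h⟩ := pt_bound 1 r hr
    have hb : Tendsto (fun s : ℝ => C * Real.exp (-r) * Real.exp (-(r / 4) * s ^ 2))
        atTop (nhds 0) := by
      have : Tendsto (fun s : ℝ => Real.exp (-(r / 4) * s ^ 2)) atTop (nhds 0) := by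
        apply Real.tendsto_exp_atBot.comp
        exact (tendsto_pow_atTop (by norm_num)).const_mul_atTop_of_neg (by linarith)
      simpa using this.const_mul (C * Real.exp (-r))
    refine squeeze_zero_norm' ?_ hb
    filter_upwards [eventually_ge_atTop (0:ℝ)] with s hs
    refine le_trans ?_ (h r le_rfl s hs)
    rw [norm_mul, Real.norm_of_nonneg (Real.exp_pos _).le,
      Real.norm_of_nonneg (Real.sinh_nonneg_iff.2 hs), pow_one]
    gcongr
    exact (Real.sinh_lt_cosh s).le

set_option linter.unusedSimpArgs false

/-- The radius. -/
noncomputable def RB (X y : ℝ) : ℝ := Real.sqrt (X ^ 2 + y ^ 2)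

lemma RB_pos {X : ℝ} (hX : 0 < X) (y : ℝ) : 0 < RB X y := Real.sqrt_pos.2 (by positivity)

lemma RB_sq (X y : ℝ) : RB X y ^ 2 = X ^ 2 + y ^ 2 := Real.sq_sqrt (by positivity)

lemma le_RB (X y : ℝ) : X ≤ RB X y := Real.le_sqrt_of_sq_le (by nlinarith [sq_nonneg y])

lemma abs_le_RB (X y : ℝ) : |y| ≤ RB X y :=
  Real.le_sqrt_of_sq_le (by rw [sq_abs]; nlinarith [sq_nonneg X])

lemma RB_dx {X : ℝ} (hX : 0 < X) (y : ℝ) : HasDerivAt (fun x => RB x y) (X / RB X y) X := by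
  have h : HasDerivAt (fun x : ℝ => x ^ 2 + y ^ 2) (2 * X) X := by
    simpa using (hasDerivAt_pow 2 X).add_const (y ^ 2)
  refine (h.sqrt (by positivity)).congr_deriv ?_
  have := RB_pos hX y
  unfold RB at *
  field_simp

lemma RB_dy {X : ℝ} (hX : 0 < X) (y : ℝ) : HasDerivAt (fun y => RB X y) (y / RB X y) y := by
  have h : HasDerivAt (fun y : ℝ => X ^ 2 + y ^ 2) (2 * y) y := by
    simpa using (hasDerivAt_pow 2 y).const_add (X ^ 2)
  refine (h.sqrt (by positivity)).congr_deriv ?_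
  have := RB_pos hX y
  unfold RB at *
  field_simp

/-- `∂_x G`. -/
noncomputable def AB (X y : ℝ) : ℝ :=
  -(1 / (2 * π)) * (Real.exp (-y) * (X / RB X y * MB 1 (RB X y)))

/-- `∂_y G + 2 G`. -/
noncomputable def BB (X y : ℝ) : ℝ :=
  (1 / (2 * π)) * (Real.exp (-y) * (MB 0 (RB X y) - y / RB X y * MB 1 (RB X y)))

/-- `∂_x A`. -/
noncomputable def ABx (X y : ℝ) : ℝ :=
  (1 / (2 * π)) * (Real.exp (-y) *
    (X ^ 2 / RB X y ^ 2 * MB 2 (RB X y) - y ^ 2 / RB X y ^ 3 * MB 1 (RB X y)))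

/-- `∂_x B`. -/
noncomputable def BBx (X y : ℝ) : ℝ :=
  (1 / (2 * π)) * (Real.exp (-y) *
    (-(X / RB X y) * MB 1 (RB X y) + X * y / RB X y ^ 3 * MB 1 (RB X y)
      + X * y / RB X y ^ 2 * MB 2 (RB X y)))

lemma MBR_dx (n : ℕ) {X : ℝ} (hX : 0 < X) (y : ℝ) :
    HasDerivAt (fun x => MB n (RB x y)) (-MB (n + 1) (RB X y) * (X / RB X y)) X :=
  HasDerivAt.comp (h₂ := MB n) X (MB_hasDerivAt n _ (RB_pos hX y)) (RB_dx hX y)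

lemma MBR_dy (n : ℕ) {X : ℝ} (hX : 0 < X) (y : ℝ) :
    HasDerivAt (fun y => MB n (RB X y)) (-MB (n + 1) (RB X y) * (y / RB X y)) y :=
  HasDerivAt.comp (h₂ := MB n) y (MB_hasDerivAt n _ (RB_pos hX y)) (RB_dy hX y)

lemma exp_dy (y : ℝ) : HasDerivAt (fun y : ℝ => Real.exp (-y)) (-Real.exp (-y)) y := by
  simpa using (hasDerivAt_neg y).exp

lemma AB_dx {X : ℝ} (hX : 0 < X) (y : ℝ) : HasDerivAt (fun x => AB x y) (ABx X y) X := by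
  have hR := RB_pos hX y
  refine (((((hasDerivAt_id X).div (RB_dx hX y) hR.ne').mul (MBR_dx 1 hX y)).const_mul
    (Real.exp (-y))).const_mul (-(1 / (2 * π)))).congr_deriv ?_
  have h2 := RB_sq X y
  have : X ^ 2 = RB X y ^ 2 - y ^ 2 := by linarith
  unfold ABx
  simp only [id, Pi.sub_apply, Pi.mul_apply, Pi.div_apply]
  field_simp
  rw [this]
  ring

lemma AB_dy {X : ℝ} (hX : 0 < X) (y : ℝ) :
    HasDerivAt (fun y => AB X y) (BBx X y - 2 * AB X y) y := by
  have hR := RB_pos hX y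
  refine (((exp_dy y).mul (((hasDerivAt_const y X).div (RB_dy hX y) hR.ne').mul
    (MBR_dy 1 hX y))).const_mul (-(1 / (2 * π)))).congr_deriv ?_
  unfold BBx AB
  simp only [Pi.sub_apply, Pi.mul_apply, Pi.div_apply]
  field_simp
  ring

lemma BB_dx {X : ℝ} (hX : 0 < X) (y : ℝ) : HasDerivAt (fun x => BB x y) (BBx X y) X := by
  have hR := RB_pos hX y
  refine ((((MBR_dx 0 hX y).sub (((hasDerivAt_const X y).div (RB_dx hX y) hR.ne').mul
    (MBR_dx 1 hX y))).const_mul (Real.exp (-y))).const_mul (1 / (2 * π))).congr_deriv ?_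
  unfold BBx
  simp only [Pi.sub_apply, Pi.mul_apply, Pi.div_apply]
  field_simp
  ring

lemma BB_dy {X : ℝ} (hX : 0 < X) (y : ℝ) : HasDerivAt (fun y => BB X y) (-ABx X y) y := by
  have hR := RB_pos hX y
  refine (((exp_dy y).mul ((MBR_dy 0 hX y).sub (((hasDerivAt_id y).div (RB_dy hX y) hR.ne').mul
    (MBR_dy 1 hX y)))).const_mul (1 / (2 * π))).congr_deriv ?_
  have h2 := RB_sq X y
  have : X ^ 2 = RB X y ^ 2 - y ^ 2 := by linarith
  unfold ABx
  simp only [id, Pi.sub_apply, Pi.mul_apply, Pi.div_apply, MB_bessel _ hR]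
  field_simp
  rw [this]
  ring

lemma Gt_dx (t x y : ℝ) (h : 0 < x + t) :
    HasDerivAt (fun x' => Gt t x' y) (AB (x + t) y) x := by
  have h1 : HasDerivAt (fun x' : ℝ => x' + t) 1 x := (hasDerivAt_id x).add_const t
  have h2 := (MBR_dx 0 h y).comp x h1
  have h3 : (fun x' => Gt t x' y) = fun x' => (1 / (2 * π)) * Real.exp (-y) * MB 0 (RB (x' + t) y) := by
    funext x'; simp [Gt, K0_eq, RB]
  rw [h3]
  refine (h2.const_mul ((1 / (2 * π)) * Real.exp (-y))).congr_deriv ?_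
  unfold AB
  ring

lemma Gt_dy (t x y : ℝ) (h : 0 < x + t) :
    deriv (fun y' => Gt t x y') y + 2 * Gt t x y = BB (x + t) y := by
  have h3 : (fun y' => Gt t x y') =
      fun y' => (1 / (2 * π)) * (Real.exp (-y') * MB 0 (RB (x + t) y')) := by
    funext x'; simp [Gt, K0_eq, RB]; ring
  have h4 := ((exp_dy y).mul (MBR_dy 0 h y)).const_mul (1 / (2 * π))
  have h5 : deriv (fun y' => Gt t x y') y = (1 / (2 * π)) * (-Real.exp (-y) * MB 0 (RB (x + t) y)
      + Real.exp (-y) * (-MB (0 + 1) (RB (x + t) y) * (y / RB (x + t) y))) := by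
    rw [h3]
    exact h4.deriv
  rw [h5, congrFun h3 y]
  unfold BB
  ring

lemma Pt_eq (t x y : ℝ) : Pt t x y = -2 * AB (x + t) y := by
  unfold Pt AB
  rw [K1_eq, ← RB]
  by_cases hr : RB (x + t) y = 0
  · simp [hr]
  · field_simp

lemma AB_neg {X : ℝ} (hX : 0 < X) (y : ℝ) : AB X y < 0 := by
  have hR := RB_pos hX y
  have := MB_pos 1 _ hR
  have h : 0 < (1 / (2 * π)) * (Real.exp (-y) * (X / RB X y * MB 1 (RB X y))) := by positivity
  unfold AB
  linarith

lemma AB_cont {X : ℝ} (hX : 0 < X) : Continuous (AB X) :=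
  continuous_iff_continuousAt.2 fun y => (AB_dy hX y).continuousAt

lemma BB_cont {X : ℝ} (hX : 0 < X) : Continuous (BB X) :=
  continuous_iff_continuousAt.2 fun y => (BB_dy hX y).continuousAt

lemma RB_cont {X : ℝ} (hX : 0 < X) : Continuous (RB X) :=
  continuous_iff_continuousAt.2 fun y => (RB_dy hX y).continuousAt

lemma MBR_cont (n : ℕ) {X : ℝ} (hX : 0 < X) : Continuous (fun y => MB n (RB X y)) :=
  continuous_iff_continuousAt.2 fun y => (MBR_dy n hX y).continuousAt

lemma ABx_cont {X : ℝ} (hX : 0 < X) : Continuous (ABx X) := by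
  have h1 := MBR_cont 1 hX
  have h2 := MBR_cont 2 hX
  have h3 := RB_cont hX
  have h4 : ∀ y, RB X y ^ 2 ≠ 0 := fun y => (pow_pos (RB_pos hX y) 2).ne'
  have h5 : ∀ y, RB X y ^ 3 ≠ 0 := fun y => (pow_pos (RB_pos hX y) 3).ne'
  unfold ABx
  fun_prop (disch := assumption)

lemma BBx_cont {X : ℝ} (hX : 0 < X) : Continuous (BBx X) := by
  have h1 := MBR_cont 1 hX
  have h2 := MBR_cont 2 hX
  have h3 := RB_cont hX
  have h4 : ∀ y, RB X y ^ 2 ≠ 0 := fun y => (pow_pos (RB_pos hX y) 2).ne'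
  have h5 : ∀ y, RB X y ^ 3 ≠ 0 := fun y => (pow_pos (RB_pos hX y) 3).ne'
  have h6 : ∀ y, RB X y ≠ 0 := fun y => (RB_pos hX y).ne'
  unfold BBx
  fun_prop (disch := assumption)

/-- The dominating function `R^{-3/2}`. -/
noncomputable def gB (X y : ℝ) : ℝ := Real.sqrt (RB X y) / RB X y ^ 2

lemma RB_mono {a X : ℝ} (ha : 0 < a) (h : a ≤ X) (y : ℝ) : RB a y ≤ RB X y := by
  unfold RB
  gcongr

lemma gB_eq {X : ℝ} (hX : 0 < X) (y : ℝ) : gB X y = 1 / (RB X y * Real.sqrt (RB X y)) := by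
  have hR := RB_pos hX y
  have hS := Real.sqrt_pos.2 hR
  have := Real.sq_sqrt hR.le
  unfold gB
  field_simp
  linarith

lemma gB_nonneg (X y : ℝ) : 0 ≤ gB X y := by unfold gB; positivity

lemma gB_mono {a X : ℝ} (ha : 0 < a) (h : a ≤ X) (y : ℝ) : gB X y ≤ gB a y := by
  have h1 := RB_pos ha y
  have h2 := RB_mono ha h y
  rw [gB_eq ha, gB_eq (ha.trans_le h)]
  have := Real.sqrt_pos.2 h1
  have h3 := h1.le.trans h2
  gcongr

lemma gB_integrable {a : ℝ} (ha : 0 < a) : Integrable (gB a) := by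
  have h := (integrable_rpow_neg_one_add_norm_sq (E := ℝ) (μ := volume) (r := 3 / 2)
    (by norm_num)).comp_div ha.ne'
  refine (h.const_mul (Real.sqrt a / a ^ 2)).congr (ae_of_all _ fun y => ?_)
  simp only
  rw [Real.norm_eq_abs, sq_abs]
  set w := 1 + (y / a) ^ 2 with hw
  have hw0 : 0 < w := by positivity
  have h1 : RB a y = a * Real.sqrt w := by
    unfold RB
    rw [← Real.sqrt_sq ha.le, ← Real.sqrt_mul (by positivity), Real.sqrt_sq ha.le]
    congr 1
    rw [hw]
    field_simp
  unfold gB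
  rw [h1, Real.sqrt_mul ha.le, mul_pow, Real.sq_sqrt hw0.le]
  have h2 : w ^ (-(3 / 2) / 2 : ℝ) = Real.sqrt (Real.sqrt w) / w := by
    rw [Real.sqrt_eq_rpow, Real.sqrt_eq_rpow, ← Real.rpow_mul hw0.le]
    nth_rewrite 3 [← Real.rpow_one w]
    rw [← Real.rpow_sub hw0]
    norm_num
  rw [h2]
  ring

set_option maxHeartbeats 1000000 in
lemma main_bounds (a : ℝ) (ha : 0 < a) : ∃ C : ℝ, 0 < C ∧ ∀ X, a ≤ X → ∀ y,
    |AB X y| ≤ C / Real.sqrt (RB X y) ∧ |BB X y| ≤ C / Real.sqrt (RB X y) ∧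
    |AB X y| ≤ C * (X + 1) * gB X y ∧ |ABx X y| ≤ C * (X + 1) * gB X y ∧
    |BBx X y| ≤ C * (X + 1) * gB X y ∧ |AB X y * BB X y| ≤ C * gB X y := by
  obtain ⟨C0, hC0, hb0⟩ := MB_bound 0 a ha
  obtain ⟨C1, hC1, hb1⟩ := MB_bound 1 a ha
  obtain ⟨C2, hC2, hb2⟩ := MB_bound 2 a ha
  set C := C0 + C1 + C2 with hC
  have hCpos : 0 < C := by positivity
  refine ⟨C + C * C, by positivity, fun X hX y => ?_⟩
  have hX0 : 0 < X := ha.trans_le hX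
  have hR := RB_pos hX0 y
  have hXR := le_RB X y
  have hyR := abs_le_RB X y
  have hR2 := RB_sq X y
  have hgB := gB_eq hX0 y
  have hp : 1 / (2 * π) ≤ 1 / 2 := by
    have := Real.pi_gt_three
    gcongr
    linarith
  have hp0 : 0 < 1 / (2 * π) := by positivity
  unfold AB BB ABx BBx
  set p := 1 / (2 * π)
  have hm0' := hb0 _ (hX.trans hXR)
  have hm1' := hb1 _ (hX.trans hXR)
  have hm2' := hb2 _ (hX.trans hXR)
  have hn0 := MB_nonneg 0 (RB X y)
  have hn1 := MB_nonneg 1 (RB X y)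
  have hn2 := MB_nonneg 2 (RB X y)
  set R := RB X y
  set S := Real.sqrt R
  have hS : 0 < S := Real.sqrt_pos.2 hR
  have hSS : S * S = R := Real.mul_self_sqrt hR.le
  rw [hgB]
  set E := Real.exp (-y) * Real.exp (-R) with hE
  have hE0 : 0 < E := by positivity
  have hE1 : E ≤ 1 := by
    rw [hE, ← Real.exp_add, Real.exp_le_one_iff]
    linarith [neg_abs_le y]
  have hEE : E * E ≤ S / X := by
    have e1 : E * E = Real.exp (-(2 * (R + y))) := by
      rw [hE, ← Real.exp_add, ← Real.exp_add]; ring_nf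
    have e2 : X ^ 2 / R ≤ 2 * (R + y) := by
      rw [div_le_iff₀ hR]
      nlinarith [neg_abs_le y, le_abs_self y]
    have e3 : (X / S) ^ 2 = X ^ 2 / R := by rw [div_pow, ← hSS, sq S]
    have e4 : X / S ≤ Real.exp (2 * (R + y)) := by
      have := Real.add_one_le_exp (2 * (R + y))
      nlinarith [sq_nonneg (X / S - 1)]
    rw [e1, Real.exp_neg, ← inv_div]
    exact inv_anti₀ (by positivity) e4
  have conv : ∀ n : ℕ, ∀ D : ℝ, D ≤ C → MB n R ≤ D * Real.exp (-R) / S →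
      Real.exp (-y) * MB n R ≤ C * E / S := by
    intro n D hD h
    calc Real.exp (-y) * MB n R ≤ Real.exp (-y) * (D * Real.exp (-R) / S) := by gcongr
      _ ≤ Real.exp (-y) * (C * Real.exp (-R) / S) := by gcongr
      _ = _ := by rw [hE]; ring
  have k0 := conv 0 C0 (by linarith) hm0'
  have k1 := conv 1 C1 (by linarith) hm1'
  have k2 := conv 2 C2 (by linarith) hm2'
  set m0 := Real.exp (-y) * MB 0 R with hm0
  set m1 := Real.exp (-y) * MB 1 R with hm1
  set m2 := Real.exp (-y) * MB 2 R with hm2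
  have l0 : 0 ≤ m0 := by positivity
  have l1 : 0 ≤ m1 := by positivity
  have l2 : 0 ≤ m2 := by positivity
  have r0 : -p * (Real.exp (-y) * (X / R * MB 1 R)) = -(p * (X / R * m1)) := by rw [hm1]; ring
  have r1 : p * (Real.exp (-y) * (MB 0 R - y / R * MB 1 R)) = p * (m0 - y / R * m1) := by
    rw [hm0, hm1]; ring
  have r2 : p * (Real.exp (-y) * (X ^ 2 / R ^ 2 * MB 2 R - y ^ 2 / R ^ 3 * MB 1 R)) =
      p * ((X / R) * (X / R) * m2 - (y / R) * (y / R) * (1 / R) * m1) := by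
    rw [hm2, hm1]; ring
  have r3 : p * (Real.exp (-y) * (-(X / R) * MB 1 R + X * y / R ^ 3 * MB 1 R
      + X * y / R ^ 2 * MB 2 R)) =
      p * (-((X / R) * m1) + (X / R) * (y / R) * (1 / R) * m1 + (X / R) * (y / R) * m2) := by
    rw [hm2, hm1]; ring
  rw [r0, r1, r2, r3]
  have hxi0 : 0 ≤ X / R := by positivity
  have hxi1 : X / R ≤ 1 := (div_le_one hR).2 hXR
  have heta : |y / R| ≤ 1 := by rw [abs_div, abs_of_pos hR]; exact (div_le_one hR).2 hyR
  have hq : C * E / S ≤ C / S := by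
    gcongr
    nlinarith
  have hXi : X / R * (C / S) = C * X * (1 / (R * S)) := by field_simp
  have hI : 1 / R * (C / S) = C * (1 / (R * S)) := by field_simp
  have hI0 : 0 < 1 / R := by positivity
  set ξ := X / R with hξ
  set η := y / R with hη
  set q := C * E / S with hqdef
  have hq0 : 0 ≤ q := by positivity
  have A1 : |-(p * (ξ * m1))| ≤ ξ * q / 2 := by
    rw [abs_neg, abs_of_nonneg (by positivity)]
    calc p * (ξ * m1) ≤ 1 / 2 * (ξ * q) := by gcongr
      _ = _ := by ring
  have em1 : |η * m1| ≤ q := by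
    rw [abs_mul, abs_of_nonneg l1]
    calc |η| * m1 ≤ 1 * q := by gcongr
      _ = q := one_mul _
  have B1 : |p * (m0 - η * m1)| ≤ q := by
    rw [abs_mul, abs_of_pos hp0]
    have : |m0 - η * m1| ≤ 2 * q := by
      refine (abs_sub _ _).trans ?_
      rw [abs_of_nonneg l0]
      linarith
    calc p * |m0 - η * m1| ≤ 1 / 2 * (2 * q) := by gcongr
      _ = q := by ring
  have hU : 0 < 1 / (R * S) := by positivity
  have hxq : ξ * q ≤ C * X * (1 / (R * S)) := by
    rw [← hXi]; gcongr
  have hiq : 1 / R * q ≤ C * (1 / (R * S)) := by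
    rw [← hI]; gcongr
  have hCC : 0 < C * C := by positivity
  have hlast : (C * X + C) * (1 / (R * S)) ≤ (C + C * C) * (X + 1) * (1 / (R * S)) := by
    gcongr
    nlinarith
  have hCS : C / S ≤ (C + C * C) / S := by
    gcongr
    linarith
  rw [add_mul (C * X)] at hlast
  set W := (C + C * C) * (X + 1) * (1 / (R * S))
  have hnn : 0 ≤ C * (1 / (R * S)) := by positivity
  have hnn2 : 0 ≤ C * X * (1 / (R * S)) := by positivity
  refine ⟨?_, ?_, ?_, ?_, ?_, ?_⟩
  · have := mul_le_mul_of_nonneg_right hxi1 hq0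
    linarith
  · linarith
  · linarith
  · rw [abs_mul, abs_of_pos hp0]
    have e1 : |ξ * ξ * m2| ≤ ξ * q := by
      rw [abs_of_nonneg (by positivity)]
      calc ξ * ξ * m2 ≤ ξ * 1 * q := by gcongr
        _ = _ := by ring
    have e2 : |η * η * (1 / R) * m1| ≤ 1 / R * q := by
      rw [abs_mul, abs_mul, abs_mul, abs_of_nonneg l1, abs_of_pos hI0]
      calc |η| * |η| * (1 / R) * m1 ≤ 1 * 1 * (1 / R) * q := by gcongr
        _ = _ := by ring
    have e3 := abs_sub (ξ * ξ * m2) (η * η * (1 / R) * m1)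
    have e4 : p * |ξ * ξ * m2 - η * η * (1 / R) * m1| ≤ 1 * |ξ * ξ * m2 - η * η * (1 / R) * m1| := by
      gcongr
      linarith
    linarith
  · rw [abs_mul, abs_of_pos hp0]
    have e0 : |-(ξ * m1)| ≤ ξ * q := by
      rw [abs_neg, abs_of_nonneg (by positivity)]
      gcongr
    have e1 : |ξ * η * m2| ≤ ξ * q := by
      rw [abs_mul, abs_mul, abs_of_nonneg l2, abs_of_nonneg hxi0]
      calc ξ * |η| * m2 ≤ ξ * 1 * q := by gcongr
        _ = _ := by ring
    have e2 : |ξ * η * (1 / R) * m1| ≤ 1 / R * q := by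
      rw [abs_mul, abs_mul, abs_mul, abs_of_nonneg l1, abs_of_pos hI0, abs_of_nonneg hxi0]
      calc ξ * |η| * (1 / R) * m1 ≤ 1 * 1 * (1 / R) * q := by gcongr
        _ = _ := by ring
    have e3 := abs_add_three (-(ξ * m1)) (ξ * η * (1 / R) * m1) (ξ * η * m2)
    have e4 : p * |-(ξ * m1) + ξ * η * (1 / R) * m1 + ξ * η * m2| ≤
        1 / 2 * |-(ξ * m1) + ξ * η * (1 / R) * m1 + ξ * η * m2| := by
      gcongr
    linarith
  · rw [abs_mul]
    calc |-(p * (ξ * m1))| * |p * (m0 - η * m1)| ≤ (ξ * q / 2) * q := by gcongr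
      _ = ξ / 2 * (C * C / R) * (E * E) := by
        rw [hqdef, ← hSS]; field_simp
      _ ≤ ξ / 2 * (C * C / R) * (S / X) := by gcongr
      _ = C * C / 2 * (1 / (R * S)) := by
        rw [hξ]
        field_simp
        rw [sq, hSS]
      _ ≤ _ := by
        gcongr
        linarith

lemma RB_tendsto {X : ℝ} {l : Filter ℝ} (h : Tendsto (fun y : ℝ => |y|) l atTop) (C : ℝ) :
    Tendsto (fun y => C / Real.sqrt (RB X y)) l (nhds 0) := by
  have h1 : Tendsto (fun y => RB X y) l atTop := tendsto_atTop_mono (fun y => abs_le_RB X y) h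
  exact (Real.tendsto_sqrt_atTop.comp h1).const_div_atTop C

lemma integrable_of_bound {F : ℝ → ℝ} (hF : Continuous F) {a K : ℝ} (ha : 0 < a)
    (h : ∀ y, |F y| ≤ K * gB a y) : Integrable F :=
  ((gB_integrable ha).const_mul K).mono' hF.aestronglyMeasurable (ae_of_all _ h)

lemma AB_integrable {X : ℝ} (hX : 0 < X) : Integrable (AB X) := by
  obtain ⟨C, hC, hb⟩ := main_bounds X hX
  exact integrable_of_bound (AB_cont hX) hX (fun y => (hb X le_rfl y).2.2.1)

lemma prod_bound {a b p q K : ℝ} (ha : |a| ≤ p) (hb : |b| ≤ q) (hK : p * q ≤ K) : |a * b| ≤ K := by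
  rw [abs_mul]
  exact (mul_le_mul ha hb (abs_nonneg _) ((abs_nonneg _).trans ha)).trans hK

lemma const_bound {C a X : ℝ} (hC : 0 < C) (ha : 0 < a) (h : a ≤ X) (y : ℝ) :
    C / Real.sqrt (RB X y) ≤ C / Real.sqrt a := by
  have := h.trans (le_RB X y)
  have := Real.sqrt_pos.2 ha
  gcongr

lemma AB_sq_integrable {X : ℝ} (hX : 0 < X) : Integrable (fun y => AB X y ^ 2) := by
  obtain ⟨C, hC, hb⟩ := main_bounds X hX
  refine integrable_of_bound (K := C / Real.sqrt X * (C * (X + 1)))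
    ((AB_cont hX).pow 2) hX (fun y => ?_)
  obtain ⟨b1, b2, b3, b4, b5, b6⟩ := hb X le_rfl y
  rw [sq]
  exact prod_bound (b1.trans (const_bound hC hX le_rfl y)) b3 (le_of_eq (by ring))

/-- The flux at abscissa `X`. -/
noncomputable def JB (X : ℝ) : ℝ := ∫ y, AB X y * BB X y

lemma exact_zero {X : ℝ} (hX : 0 < X) :
    Integrable (fun y => AB X y * (BBx X y - 2 * AB X y) + BB X y * ABx X y) ∧
    ∫ y, (AB X y * (BBx X y - 2 * AB X y) + BB X y * ABx X y) = 0 := by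
  obtain ⟨C, hC, hb⟩ := main_bounds X hX
  have hA := AB_cont hX
  have hB := BB_cont hX
  have hAx := ABx_cont hX
  have hBx := BBx_cont hX
  have hint : Integrable (fun y => AB X y * (BBx X y - 2 * AB X y) + BB X y * ABx X y) := by
    refine integrable_of_bound (K := 4 * (C / Real.sqrt X * (C * (X + 1)))) (by fun_prop) hX
      (fun y => ?_)
    obtain ⟨b1, b2, b3, b4, b5, b6⟩ := hb X le_rfl y
    have c0 := const_bound hC hX le_rfl y
    have e1 : |BBx X y - 2 * AB X y| ≤ 3 * (C * (X + 1) * gB X y) := by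
      refine (abs_sub _ _).trans ?_
      rw [abs_mul, abs_two]
      linarith
    have e2 := prod_bound (b1.trans c0) e1 le_rfl
    have e3 := prod_bound (b2.trans c0) b4 le_rfl
    refine (abs_add_le _ _).trans ?_
    linarith
  refine ⟨hint, ?_⟩
  have hlim : ∀ l : Filter ℝ, Tendsto (fun y : ℝ => |y|) l atTop →
      Tendsto (fun y => (AB X y ^ 2 - BB X y ^ 2) / 2) l (nhds 0) := by
    intro l hl
    have h0 := RB_tendsto (X := X) hl C
    have hA0 : Tendsto (fun y => AB X y) l (nhds 0) :=
      squeeze_zero_norm (fun y => (hb X le_rfl y).1) h0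
    have hB0 : Tendsto (fun y => BB X y) l (nhds 0) :=
      squeeze_zero_norm (fun y => (hb X le_rfl y).2.1) h0
    simpa using ((hA0.pow 2).sub (hB0.pow 2)).div_const 2
  have := integral_of_hasDerivAt_of_tendsto (f := fun y => (AB X y ^ 2 - BB X y ^ 2) / 2)
    (fun y => ((((AB_dy hX y).pow 2).sub ((BB_dy hX y).pow 2)).div_const 2).congr_deriv
      (by simp; ring)) hint (hlim _ tendsto_abs_atBot_atTop) (hlim _ tendsto_abs_atTop_atTop)
  simpa using this

lemma JB_hasDerivAt {X : ℝ} (hX : 0 < X) : HasDerivAt JB (2 * ∫ y, AB X y ^ 2) X := by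
  have ha : 0 < X / 2 := by positivity
  obtain ⟨C, hC, hb⟩ := main_bounds (X / 2) ha
  have key := hasDerivAt_integral_of_dominated_loc_of_deriv_le (𝕜 := ℝ)
    (μ := (volume : Measure ℝ)) (x₀ := X) (s := Ioo (X / 2) (2 * X))
    (F := fun X y => AB X y * BB X y)
    (F' := fun X y => ABx X y * BB X y + AB X y * BBx X y)
    (bound := fun y => 2 * (C / Real.sqrt (X / 2) * (C * (2 * X + 1))) * gB (X / 2) y)
    (Ioo_mem_nhds (by linarith) (by linarith)) ?_ ?_ ?_ ?_
    ((gB_integrable ha).const_mul _) ?_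
  · refine key.2.congr_deriv ?_
    obtain ⟨i1, i2⟩ := exact_zero hX
    have i3 := (AB_sq_integrable hX).const_mul 2
    have : (fun y => ABx X y * BB X y + AB X y * BBx X y) = fun y =>
        (AB X y * (BBx X y - 2 * AB X y) + BB X y * ABx X y) + 2 * AB X y ^ 2 := by
      funext y; ring
    rw [this, MeasureTheory.integral_add i1 i3, i2, MeasureTheory.integral_const_mul, zero_add]
  · filter_upwards [Ioi_mem_nhds hX] with x hx
    exact ((AB_cont hx).mul (BB_cont hx)).aestronglyMeasurable
  · obtain ⟨C', hC', hb'⟩ := main_bounds X hX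
    exact integrable_of_bound ((AB_cont hX).mul (BB_cont hX)) hX
      (fun y => (hb' X le_rfl y).2.2.2.2.2)
  · exact (((ABx_cont hX).mul (BB_cont hX)).add
      ((AB_cont hX).mul (BBx_cont hX))).aestronglyMeasurable
  · refine ae_of_all _ fun y x hx => ?_
    obtain ⟨b1, b2, b3, b4, b5, b6⟩ := hb x hx.1.le y
    have c0 := const_bound hC ha hx.1.le y
    have g0 := gB_mono ha hx.1.le y
    have gn := gB_nonneg x y
    have hx1 := hx.1
    have hx2 := hx.2
    have h3 : C * (x + 1) * gB x y ≤ C * (2 * X + 1) * gB (X / 2) y := by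
      gcongr
    have e2 := prod_bound (b4.trans h3) (b2.trans c0) le_rfl
    have e3 := prod_bound (b1.trans c0) (b5.trans h3) le_rfl
    refine (abs_add_le _ _).trans ?_
    linarith
  · refine ae_of_all _ fun y x hx => ?_
    have hx0 : 0 < x := ha.trans hx.1
    exact (AB_dx hx0 y).mul (BB_dx hx0 y)

lemma JB_tendsto : Tendsto JB atTop (nhds 0) := by
  obtain ⟨C, hC, hb⟩ := main_bounds 1 one_pos
  have h : Tendsto (fun X => ∫ y, AB X y * BB X y) atTop (nhds (∫ _ : ℝ, (0:ℝ))) := by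
    refine tendsto_integral_filter_of_dominated_convergence (fun y => C * gB 1 y) ?_ ?_
      ((gB_integrable one_pos).const_mul C) ?_
    · filter_upwards [eventually_ge_atTop (1:ℝ)] with X hX
      have hX0 : 0 < X := by linarith
      exact ((AB_cont hX0).mul (BB_cont hX0)).aestronglyMeasurable
    · filter_upwards [eventually_ge_atTop (1:ℝ)] with X hX
      refine ae_of_all _ fun y => ((hb X hX y).2.2.2.2.2).trans ?_
      have := gB_mono one_pos hX y
      gcongr
    · refine ae_of_all _ fun y => ?_
      have h1 : Tendsto (fun X => RB X y) atTop atTop :=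
        tendsto_atTop_mono (fun X => le_RB X y) tendsto_id
      have h0 : Tendsto (fun X => C / Real.sqrt (RB X y)) atTop (nhds 0) :=
        (Real.tendsto_sqrt_atTop.comp h1).const_div_atTop C
      have hA0 : Tendsto (fun X => AB X y) atTop (nhds 0) := by
        refine squeeze_zero_norm' ?_ h0
        filter_upwards [eventually_ge_atTop (1:ℝ)] with X hX
        exact (hb X hX y).1
      have hB0 : Tendsto (fun X => BB X y) atTop (nhds 0) := by
        refine squeeze_zero_norm' ?_ h0
        filter_upwards [eventually_ge_atTop (1:ℝ)] with X hX
        exact (hb X hX y).2.1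
      simpa using hA0.mul hB0
  rw [MeasureTheory.integral_zero] at h
  exact h

lemma AB_sq_pos {X : ℝ} (hX : 0 < X) : 0 < ∫ y, AB X y ^ 2 := by
  rw [MeasureTheory.integral_pos_iff_support_of_nonneg (fun y => sq_nonneg _) (AB_sq_integrable hX)]
  have : Function.support (fun y => AB X y ^ 2) = univ := by
    ext y
    simp [(AB_neg hX y).ne]
  rw [this]
  simp

lemma ut_hasDerivAt (t : ℝ) (ht : 0 < t) (y : ℝ) :
    HasDerivAt (fun y => ut t 0 y) (-(-2 * AB t y)) y := by
  have hP : ∀ z, Pt t 0 z = -2 * AB t z := fun z => by rw [Pt_eq, zero_add]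
  have hi : Integrable (fun z => -2 * AB t z) := (AB_integrable ht).const_mul _
  have hc : Continuous (fun z => -2 * AB t z) := (AB_cont ht).const_mul _
  have h1 : (fun y => ut t 0 y) = fun y => (∫ z in Ioi (0:ℝ), -2 * AB t z)
      - ∫ z in (0:ℝ)..y, -2 * AB t z := by
    funext y
    unfold ut
    simp_rw [hP]
    have := integral_interval_add_Ioi (a := (0:ℝ)) (b := y) hi.integrableOn hi.integrableOn
    linarith
  rw [h1]
  exact (integral_hasDerivAt_right hi.intervalIntegrable
    (hc.stronglyMeasurableAtFilter _ _) hc.continuousAt).const_sub _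

/-- The nonlinearity `f^t`, implicitly defined on `[0,1]` by
`f^t(u^t(0,y)) = 2(∂_y G^t + 2 G^t)(0,y)`, is positively balanced:
`∫₀¹ f^t(s) ds = 8 ∫_{ℝ²₊} (∂_x G^t)² dx dy > 0`. -/
theorem ft_positively_balanced (t : ℝ) (ht : 0 < t) (f : ℝ → ℝ)
    (hanti : StrictAnti (fun y : ℝ => ut t 0 y))
    (hlim1 : Tendsto (fun y : ℝ => ut t 0 y) atBot (nhds 1))
    (hlim0 : Tendsto (fun y : ℝ => ut t 0 y) atTop (nhds 0))
    (hf : ∀ y : ℝ, f (ut t 0 y) =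
      2 * (deriv (fun y' => Gt t 0 y') y + 2 * Gt t 0 y)) :
    (∫ s in (0 : ℝ)..1, f s) =
        8 * ∫ x in Set.Ioi (0 : ℝ), ∫ y : ℝ, (deriv (fun x' => Gt t x' y) x) ^ 2 ∧
      0 < ∫ x in Set.Ioi (0 : ℝ), ∫ y : ℝ, (deriv (fun x' => Gt t x' y) x) ^ 2 := by
  have hD : ∀ x ∈ Ioi (0:ℝ), (∫ y : ℝ, (deriv (fun x' => Gt t x' y) x) ^ 2)
      = ∫ y, AB (x + t) y ^ 2 := by
    intro x hx
    have hx' : 0 < x + t := add_pos hx ht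
    congr 1
    funext y
    rw [(Gt_dx t x y hx').deriv]
  rw [setIntegral_congr_fun measurableSet_Ioi hD]
  have hder : ∀ x ∈ Ici (0:ℝ), HasDerivAt (fun x => JB (x + t) / 2)
      (∫ y, AB (x + t) y ^ 2) x := by
    intro x hx
    have hx' : 0 < x + t := add_pos_of_nonneg_of_pos hx ht
    have h1 : HasDerivAt (fun x' : ℝ => x' + t) 1 x := (hasDerivAt_id x).add_const t
    exact ((HasDerivAt.comp (h₂ := JB) x (JB_hasDerivAt hx') h1).div_const 2).congr_deriv
      (by ring)
  have hpos : ∀ x ∈ Ioi (0:ℝ), 0 < ∫ y, AB (x + t) y ^ 2 :=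
    fun x hx => AB_sq_pos (add_pos hx ht)
  have hlim : Tendsto (fun x => JB (x + t) / 2) atTop (nhds 0) := by
    simpa using (JB_tendsto.comp (tendsto_atTop_add_const_right _ t tendsto_id)).div_const 2
  have hval := integral_Ioi_of_hasDerivAt_of_nonneg' hder (fun x hx => (hpos x hx).le) hlim
  have hmono : StrictMonoOn (fun x => JB (x + t) / 2) (Ici 0) := by
    refine strictMonoOn_of_deriv_pos (convex_Ici 0)
      (fun x hx => (hder x hx).continuousAt.continuousWithinAt) ?_
    intro x hx
    rw [interior_Ici] at hx
    rw [(hder x (mem_Ici.2 (le_of_lt (mem_Ioi.1 hx)))).deriv]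
    exact hpos x hx
  have hneg : JB (0 + t) / 2 < 0 := by
    have h1 : JB (0 + t) / 2 < JB (1 + t) / 2 :=
      hmono (by simp) (by simp) one_pos
    have h2 : JB (1 + t) / 2 ≤ 0 := by
      refine ge_of_tendsto hlim ?_
      filter_upwards [eventually_ge_atTop (1:ℝ)] with x hx
      exact hmono.monotoneOn (by simp) (by simp only [mem_Ici]; linarith) hx
    linarith
  rw [hval]
  refine ⟨?_, by linarith⟩
  have hcont : Continuous (fun y => ut t 0 y) :=
    continuous_iff_continuousAt.2 fun y => (ut_hasDerivAt t ht y).continuousAt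
  have himg : Set.image (fun y => ut t 0 y) univ = Ioo 0 1 := by
    ext s
    constructor
    · rintro ⟨y, -, rfl⟩
      constructor
      · have h1 : ut t 0 (y + 1) < ut t 0 y := hanti (by linarith)
        have h2 : 0 ≤ ut t 0 (y + 1) := hanti.antitone.le_of_tendsto hlim0 (y + 1)
        exact lt_of_le_of_lt h2 h1
      · have h1 : ut t 0 y < ut t 0 (y - 1) := hanti (by linarith)
        have h2 : ut t 0 (y - 1) ≤ 1 := hanti.antitone.ge_of_tendsto hlim1 (y - 1)
        exact lt_of_lt_of_le h1 h2
    · intro hs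
      obtain ⟨a, ha⟩ := (hlim0.eventually_lt_const hs.1).exists
      obtain ⟨b, hb⟩ := (hlim1.eventually_const_lt hs.2).exists
      have := mem_range_of_exists_le_of_exists_ge hcont ⟨a, ha.le⟩ ⟨b, hb.le⟩
      rwa [image_univ]
  have hcv := integral_image_eq_integral_abs_deriv_smul (s := univ) MeasurableSet.univ
    (fun y _ => (ut_hasDerivAt t ht y).hasDerivWithinAt) hanti.injective.injOn f
  rw [himg] at hcv
  rw [intervalIntegral.integral_of_le zero_le_one, integral_Ioc_eq_integral_Ioo, hcv,
    setIntegral_univ]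
  have : (fun y => |-(-2 * AB t y)| • f (ut t 0 y)) = fun y => -4 * (AB t y * BB t y) := by
    funext y
    have h1 := Gt_dy t 0 y (by linarith)
    rw [zero_add] at h1
    rw [hf, h1, abs_of_neg (by linarith [AB_neg ht y]), smul_eq_mul]
    ring
  rw [this, MeasureTheory.integral_const_mul, zero_add]
  unfold JB
  ring
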